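/- Let X and Y be compact metrizable spaces, f : X → Y continuous, and κ a cardinal. Then f is κ-tight if and only if the set {y ∈ Y : the cardinality of f⁻¹{y} is at least κ} is countable. Moreover, f is weakly c-tight if and only if f is c-tight, where c = 2^ℵ₀. -/

import Mathlib

/-!
Suppose that uncountably many fibres of `f` have at least `κ` points. Then uncountably many of
them contain a copy of `T`, where `T` is discrete of size `κ` if `κ ≤ ℵ₀`, and the Cantor space
otherwise since an uncountable fibre contains a Cantor set. The continuous injections of `T` into
single fibres form a Borel set in the Polish space `C(T, X)`, and sending each to the fibre it
lands in is a continuous map with uncountable image. Hence there is a Cantor set of such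
injections, with parameter `s`, lying in pairwise distinct fibres. Fixing a point of `T` and
varying `s` sweeps out the members of a loose family; the projection `(s, t) ↦ t` is a loose
function.

Conversely, the members of a loose family meet every fibre over the closed non-scattered, hence
uncountable, set `Q` in distinct points, and the fibres of a loose function, restricted to the
preimage of `closure Q`, form a loose family.
-/

open Set Topology

universe u

section Defs

variable {X Y K Z : Type*}

/-- A subset `S` of a topological space is *scattered* iff every nonempty subset `T ⊆ S`
has a point which is isolated in the subspace topology of `T`. -/
def IsScatteredSet [TopologicalSpace X] (S : Set X) : Prop :=
  ∀ T ⊆ S, T.Nonempty → ∃ x ∈ T, ∃ U : Set X, IsOpen U ∧ U ∩ T = {x}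

/-- A *loose family* for `f : X → Y` : a pairwise disjoint family `Ps` of closed subsets of `X`
such that for some non-scattered `Q ⊆ Y`, `f '' P = Q` for all `P ∈ Ps`. -/
def LooseFamily [TopologicalSpace X] [TopologicalSpace Y] (f : X → Y)
    (Ps : Set (Set X)) : Prop :=
  Ps.Pairwise Disjoint ∧ (∀ P ∈ Ps, IsClosed P) ∧
    ∃ Q : Set Y, ¬ IsScatteredSet Q ∧ ∀ P ∈ Ps, f '' P = Q

/-- `f` is `κ`-*tight* iff there is no loose family for `f` of cardinality `κ`. -/
def IsTightCard [TopologicalSpace X] [TopologicalSpace Y] (κ : Cardinal) (f : X → Y) : Prop :=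
  ¬ ∃ Ps : Set (Set X), LooseFamily f Ps ∧ Cardinal.mk Ps = κ

/-- `f` is *tight* iff it is `2`-tight. -/
def IsTight [TopologicalSpace X] [TopologicalSpace Y] (f : X → Y) : Prop :=
  IsTightCard 2 f

/-- A `K`-*loose function* for `f : X → Y` : a continuous `φ : D → K` with `D` closed in `X`,
such that for some non-scattered `Q ⊆ Y`, `φ(f⁻¹{y} ∩ D) = K` for all `y ∈ Q`. -/
def LooseFunction [TopologicalSpace X] [TopologicalSpace Y] [TopologicalSpace K]
    (f : X → Y) (D : Set X) (φ : X → K) : Prop :=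
  IsClosed D ∧ ContinuousOn φ D ∧
    ∃ Q : Set Y, ¬ IsScatteredSet Q ∧ ∀ y ∈ Q, φ '' (f ⁻¹' {y} ∩ D) = Set.univ

/-- `f` is *weakly c-tight* iff there is no `K`-loose function for `f`
with `K` the Cantor space `2^ω`. -/
def WeaklyCTight [TopologicalSpace X] [TopologicalSpace Y] (f : X → Y) : Prop :=
  ¬ ∃ (D : Set X) (φ : X → (ℕ → Bool)), LooseFunction f D φ

/-- `f` is *finer* than `g` iff `f x₁ = f x₂` implies `g x₁ = g x₂`. -/
def Finer (f : X → Y) (g : X → Z) : Prop :=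
  ∀ x₁ x₂ : X, f x₁ = f x₂ → g x₁ = g x₂

end Defs

/-- `X` is `κ`-*dissipated* iff every continuous map from `X` to a compact metrizable
space is refined by a `κ`-tight continuous map from `X` to a compact metrizable space. -/
def IsDissipatedCard (κ : Cardinal.{u}) (X : Type u) [TopologicalSpace X] : Prop :=
  ∀ (Z : Type u) [TopologicalSpace Z] [CompactSpace Z] [TopologicalSpace.MetrizableSpace Z],
    ∀ g : X → Z, Continuous g →
      ∃ (Y : Type u) (tY : TopologicalSpace Y),
        @CompactSpace Y tY ∧ @TopologicalSpace.MetrizableSpace Y tY ∧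
        ∃ f : X → Y, @Continuous X Y _ tY f ∧ @IsTightCard X Y _ tY κ f ∧ Finer f g

/-- `X` is *weakly c-dissipated* iff every continuous map from `X` to a compact metrizable
space is refined by a weakly c-tight continuous map from `X` to a compact metrizable space. -/
def IsWeaklyCDissipated (X : Type u) [TopologicalSpace X] : Prop :=
  ∀ (Z : Type u) [TopologicalSpace Z] [CompactSpace Z] [TopologicalSpace.MetrizableSpace Z],
    ∀ g : X → Z, Continuous g →
      ∃ (Y : Type u) (tY : TopologicalSpace Y),
        @CompactSpace Y tY ∧ @TopologicalSpace.MetrizableSpace Y tY ∧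
        ∃ f : X → Y, @Continuous X Y _ tY f ∧ @WeaklyCTight X Y _ tY f ∧ Finer f g

open Filter Function TopologicalSpace Cardinal
open scoped ENNReal

universe v w

section Scattered

variable {Y : Type*} [TopologicalSpace Y] {S T : Set Y}

theorem IsScatteredSet.mono (hT : IsScatteredSet T) (h : S ⊆ T) : IsScatteredSet S :=
  fun A hA => hT A (hA.trans h)

theorem nonempty_of_not_isScatteredSet (hS : ¬ IsScatteredSet S) : S.Nonempty := by
  by_contra hempty
  exact hS fun A hA hne => (hempty (hne.mono hA)).elim

theorem isScatteredSet_iff_forall_preperfect :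
    IsScatteredSet S ↔ ∀ A ⊆ S, Preperfect A → A = ∅ := by
  have isolated_iff (A : Set Y) :
      (∃ x ∈ A, ∃ U, IsOpen U ∧ U ∩ A = {x}) ↔ ¬ Preperfect A := by
    simp only [preperfect_iff_nhds, not_forall, not_exists, not_and, not_not, exists_prop]
    refine exists_congr fun x => and_congr_right fun hx => ⟨?_, ?_⟩
    · rintro ⟨U, hU, hUA⟩
      exact ⟨U, hU.mem_nhds (hUA.ge rfl).1, fun y hy => hUA.le hy⟩
    · rintro ⟨U, hU, hUA⟩
      obtain ⟨V, hVU, hV, hxV⟩ := mem_nhds_iff.1 hU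
      exact ⟨V, hV, Subset.antisymm (fun y hy => hUA y ⟨hVU hy.1, hy.2⟩)
        (singleton_subset_iff.2 ⟨hxV, hx⟩)⟩
  simp only [IsScatteredSet, isolated_iff, nonempty_iff_ne_empty]
  exact forall₂_congr fun A _ => not_imp_not

theorem not_countable_range_nat_bool {α : Type*} {c : (ℕ → Bool) → α} (hc : Injective c) :
    ¬ (range c).Countable := by
  intro hcount
  have huniv : (univ : Set (ℕ → Bool)).Countable :=
    preimage_range c ▸ hcount.preimage_of_injOn hc.injOn
  rw [countable_univ_iff, ← mk_le_aleph0_iff] at huniv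
  simp [aleph0_lt_continuum.not_ge] at huniv

theorem isScatteredSet_iff_countable_of_isClosed [PolishSpace Y] (hS : IsClosed S) :
    IsScatteredSet S ↔ S.Countable := by
  rw [isScatteredSet_iff_forall_preperfect]
  constructor
  · intro hscat
    by_contra hunc
    obtain ⟨A, hA, hne, hAS⟩ := exists_perfect_nonempty_of_isClosed_of_not_countable hS hunc
    exact hne.ne_empty (hscat A hAS hA.acc)
  · intro hcount A hAS hA
    by_contra hne
    let := upgradeIsCompletelyMetrizable Y
    obtain ⟨c, hcA, -, hc⟩ := hA.perfect_closure.exists_nat_bool_injection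
      (nonempty_iff_ne_empty.2 hne).closure
    exact not_countable_range_nat_bool hc (hcount.mono (hcA.trans (closure_minimal hAS hS)))

theorem not_isScatteredSet_range_nat_bool [PolishSpace Y] {c : (ℕ → Bool) → Y}
    (hc : Continuous c) (hinj : Injective c) : ¬ IsScatteredSet (range c) := by
  rw [isScatteredSet_iff_countable_of_isClosed (isCompact_range hc).isClosed]
  exact not_countable_range_nat_bool hinj

end Scattered

section UncountableImage

variable {N Y : Type*} {g : N → Y} {C : Set N}

theorem not_countable_image_condensationPoints [TopologicalSpace N] [SecondCountableTopology N]
    (hC : ¬ (g '' C).Countable) :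
    ¬ (g '' {x ∈ C | ∀ U ∈ 𝓝 x, ¬ (g '' (U ∩ C)).Countable}).Countable := by
  set A := {x ∈ C | ∀ U ∈ 𝓝 x, ¬ (g '' (U ∩ C)).Countable} with hA
  intro hcount
  have hdiff : (g '' (C \ A)).Countable := by
    refine (HereditarilyLindelofSpace.isLindelof (C \ A)).induction_on
      (p := fun S => (g '' S).Countable) (fun S T hST hT => hT.mono (image_mono hST)) ?_ ?_
    · intro 𝒮 h𝒮 hcount𝒮
      rw [sUnion_eq_biUnion, image_iUnion₂]
      exact h𝒮.biUnion hcount𝒮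
    · rintro x ⟨hxC, hxA⟩
      obtain ⟨U, hU, hgU⟩ : ∃ U ∈ 𝓝 x, (g '' (U ∩ C)).Countable := by
        simpa [hA, hxC] using hxA
      exact ⟨U ∩ C, inter_mem (mem_nhdsWithin_of_mem_nhds hU)
        (mem_of_superset self_mem_nhdsWithin sdiff_subset), hgU⟩
  refine hC ((hcount.union hdiff).mono ?_)
  rw [← image_union, union_sdiff_cancel (sep_subset _ _)]

theorem exists_mem_nhds_isClosed_subset_ediam_le [PseudoEMetricSpace N] {x : N} {U : Set N}
    (hU : U ∈ 𝓝 x) {ε : ℝ≥0∞} (hε : 0 < ε) :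
    ∃ W ∈ 𝓝 x, IsClosed W ∧ W ⊆ U ∧ Metric.ediam W ≤ ε := by
  obtain ⟨δ, hδ, hδU⟩ := Metric.nhds_basis_closedEBall.mem_iff.1 hU
  refine ⟨Metric.closedEBall x (min δ (ε / 2)),
    Metric.closedEBall_mem_nhds x (lt_min hδ (ENNReal.half_pos hε.ne')),
    Metric.isClosed_closedEBall,
    (Metric.closedEBall_subset_closedEBall (min_le_left _ _)).trans hδU, ?_⟩
  calc Metric.ediam (Metric.closedEBall x (min δ (ε / 2)))
      ≤ 2 * min δ (ε / 2) := Metric.ediam_closedEBall_le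
    _ ≤ 2 * (ε / 2) := by gcongr; exact min_le_right _ _
    _ = ε := ENNReal.mul_div_cancel (by norm_num) (by norm_num)

theorem exists_isClosed_splitting_of_not_countable_image [PseudoEMetricSpace N]
    [SecondCountableTopology N] [TopologicalSpace Y] [T2Space Y] (hg : Continuous g)
    (hCclosed : IsClosed C) (hC : ¬ (g '' C).Countable) {ε : ℝ≥0∞} (hε : 0 < ε) :
    ∃ D : Bool → Set N,
      (∀ a, (IsClosed (D a) ∧ ¬ (g '' D a).Countable) ∧ D a ⊆ C ∧ Metric.ediam (D a) ≤ ε) ∧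
      Disjoint (g '' D false) (g '' D true) := by
  have hnontriv := mt (fun h => Set.Subsingleton.countable (not_nontrivial_iff.1 h))
    (not_countable_image_condensationPoints hC)
  obtain ⟨_, ⟨x, ⟨-, hx⟩, rfl⟩, _, ⟨y, ⟨-, hy⟩, rfl⟩, hxy⟩ := not_not.1 hnontriv
  obtain ⟨U, V, hU, hV, hxU, hyV, hUV⟩ := t2_separation hxy
  obtain ⟨A, hA, hAclosed, hAU, hAε⟩ :=
    exists_mem_nhds_isClosed_subset_ediam_le ((hU.preimage hg).mem_nhds hxU) hε
  obtain ⟨B, hB, hBclosed, hBV, hBε⟩ :=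
    exists_mem_nhds_isClosed_subset_ediam_le ((hV.preimage hg).mem_nhds hyV) hε
  refine ⟨fun a => cond a B A ∩ C, ?_, hUV.mono ?_ ?_⟩
  · rintro (_ | _)
    · exact ⟨⟨hAclosed.inter hCclosed, hx A hA⟩, inter_subset_right,
        (Metric.ediam_mono inter_subset_left).trans hAε⟩
    · exact ⟨⟨hBclosed.inter hCclosed, hy B hB⟩, inter_subset_right,
        (Metric.ediam_mono inter_subset_left).trans hBε⟩
  · exact image_subset_iff.2 (inter_subset_left.trans hAU)
  · exact image_subset_iff.2 (inter_subset_left.trans hBV)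

theorem exists_cantorScheme_of_splitting [PseudoMetricSpace N] {P : Set N → Prop}
    (hsplit : ∀ C, P C → ∀ ε : ℝ≥0∞, 0 < ε → ∃ D : Bool → Set N,
      (∀ a, P (D a) ∧ D a ⊆ C ∧ Metric.ediam (D a) ≤ ε) ∧
      Disjoint (g '' D false) (g '' D true)) (hC : P C) :
    ∃ D : List Bool → Set N, (∀ l, P (D l)) ∧ CantorScheme.Antitone D ∧
      CantorScheme.VanishingDiam D ∧ CantorScheme.Disjoint fun l => g '' D l := by
  choose! piece hpiece hdisj using hsplit
  let D : List Bool → Set N := List.rec C fun a l E => piece E (l.length : ℝ≥0∞)⁻¹ a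
  have hpos (l : List Bool) : 0 < (l.length : ℝ≥0∞)⁻¹ := by simp
  have hP (l : List Bool) : P (D l) := by
    induction l with
    | nil => exact hC
    | cons a l ih => exact (hpiece _ ih _ (hpos l) a).1
  refine ⟨D, hP, fun l a => (hpiece _ (hP l) _ (hpos l) a).2.1, fun x => ?_, ?_⟩
  · refine (tendsto_add_atTop_iff_nat 1).1 (tendsto_of_tendsto_of_tendsto_of_le_of_le
      tendsto_const_nhds ENNReal.tendsto_inv_nat_nhds_zero (fun _ => zero_le) fun n => ?_)
    calc Metric.ediam (D (PiNat.res x (n + 1)))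
        ≤ ((PiNat.res x n).length : ℝ≥0∞)⁻¹ := (hpiece _ (hP _) _ (hpos _) (x n)).2.2
      _ = (n : ℝ≥0∞)⁻¹ := by rw [PiNat.res_length]
  · rintro l (_ | _) (_ | _) hab
    · exact (hab rfl).elim
    · exact hdisj _ (hP l) _ (hpos l)
    · exact (hdisj _ (hP l) _ (hpos l)).symm
    · exact (hab rfl).elim

theorem exists_nat_bool_continuous_injective_comp_of_cantorScheme [PseudoMetricSpace N]
    [CompleteSpace N] {D : List Bool → Set N} (hanti : CantorScheme.ClosureAntitone D)
    (hdiam : CantorScheme.VanishingDiam D) (hne : ∀ l, (D l).Nonempty)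
    (hdisj : CantorScheme.Disjoint fun l => g '' D l) :
    ∃ c : (ℕ → Bool) → N, Continuous c ∧ Injective (g ∘ c) := by
  have hdom (x : ℕ → Bool) : x ∈ (CantorScheme.inducedMap D).1 :=
    hanti.map_of_vanishingDiam hdiam hne ▸ mem_univ x
  let c : (ℕ → Bool) → N := fun x => (CantorScheme.inducedMap D).2 ⟨x, hdom x⟩
  have hc (x : ℕ → Bool) (n : ℕ) : g (c x) ∈ g '' D (PiNat.res x n) :=
    mem_image_of_mem g (CantorScheme.map_mem ⟨x, hdom x⟩ n)
  refine ⟨c, hdiam.map_continuous.comp (by fun_prop), fun x y hxy => PiNat.res_injective ?_⟩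
  ext n : 1
  induction n with
  | zero => simp
  | succ n ih =>
    rw [PiNat.res_succ, PiNat.res_succ, ih, List.cons.injEq]
    refine ⟨?_, rfl⟩
    by_contra hne
    refine Set.not_disjoint_iff.2 ⟨g (c x), ?_, ?_⟩ (hdisj (PiNat.res y n) hne)
    · rw [← ih, ← PiNat.res_succ]
      exact hc x (n + 1)
    · rw [← PiNat.res_succ, show g (c x) = g (c y) from hxy]
      exact hc y (n + 1)

theorem exists_nat_bool_continuous_injective_comp [TopologicalSpace N] [PolishSpace N]
    [TopologicalSpace Y] [T2Space Y] (hg : Continuous g) (hunc : ¬ (range g).Countable) :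
    ∃ c : (ℕ → Bool) → N, Continuous c ∧ Injective (g ∘ c) := by
  let := upgradeIsCompletelyMetrizable N
  obtain ⟨D, hD, hanti, hdiam, hdisj⟩ := exists_cantorScheme_of_splitting (g := g)
    (P := fun C => IsClosed C ∧ ¬ (g '' C).Countable)
    (fun C hC ε hε => exists_isClosed_splitting_of_not_countable_image hg hC.1 hC.2 hε)
    ⟨isClosed_univ, image_univ ▸ hunc⟩
  refine exists_nat_bool_continuous_injective_comp_of_cantorScheme
    (hanti.closureAntitone fun l => (hD l).1) hdiam (fun l => ?_) hdisj
  by_contra hempty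
  exact (hD l).2 (by simp [not_nonempty_iff_eq_empty.1 hempty])

theorem exists_nat_bool_continuous_injective_comp_of_analyticSet [TopologicalSpace N]
    [TopologicalSpace Y] [T2Space Y] (hg : Continuous g) (hC : MeasureTheory.AnalyticSet C)
    (hunc : ¬ (g '' C).Countable) :
    ∃ c : (ℕ → Bool) → N, Continuous c ∧ (∀ s, c s ∈ C) ∧ Injective (g ∘ c) := by
  obtain ⟨β, _, _, h, hh, rfl⟩ := MeasureTheory.analyticSet_iff_exists_polishSpace_range.1 hC
  rw [← range_comp] at hunc
  obtain ⟨c, hc, hinj⟩ := exists_nat_bool_continuous_injective_comp (hg.comp hh) hunc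
  exact ⟨h ∘ c, hh.comp hc, fun s => mem_range_self _, hinj⟩

end UncountableImage

section FiberEmbeddings

variable {S T X Y : Type*} [TopologicalSpace S] [TopologicalSpace T] [TopologicalSpace X]
  [TopologicalSpace Y] {f : X → Y}

/-- A continuous family `Φ`, indexed by `S`, of injective continuous maps `T → X`, where `Φ s` maps
into the fibre of `f` over `b s` and these fibres are pairwise distinct. Such families, with `S` the
Cantor space, are the common source of loose families and of loose functions. -/
structure IsFiberEmbeddingFamily (f : X → Y) (b : S → Y) (Φ : S → C(T, X)) : Prop where
  continuous_base : Continuous b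
  injective_base : Injective b
  continuous : Continuous Φ
  injective : ∀ s, Injective (Φ s)
  map_apply : ∀ s t, f (Φ s t) = b s

theorem isGδ_setOf_injective [LocallyCompactSpace T] [SecondCountableTopology T] [T2Space T]
    [T2Space X] : IsGδ {φ : C(T, X) | Injective φ} := by
  have hopen : IsOpen {p : T × T | p.1 ≠ p.2} := isOpen_ne_fun continuous_fst continuous_snd
  have := hopen.locallyCompactSpace
  obtain ⟨K, hK, hKU⟩ := isSigmaCompact_iff_sigmaCompactSpace.2
    (inferInstance : SigmaCompactSpace {p : T × T | p.1 ≠ p.2})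
  have heq : {φ : C(T, X) | Injective φ} = ⋂ n, {φ | ∀ p ∈ K n, φ p.1 ≠ φ p.2} := by
    ext φ
    have hmem (s t : T) : s ≠ t ↔ ∃ n, (s, t) ∈ K n := by
      simpa using (Set.ext_iff.1 hKU (s, t)).symm
    simp only [mem_ofPred_eq, mem_iInter, injective_iff_pairwise_ne, Pairwise, hmem, Prod.forall,
      onFun]
    exact ⟨fun h n s t hst => h ⟨n, hst⟩, fun h s t ⟨n, hst⟩ => h n s t hst⟩
  rw [heq]
  refine .iInter_of_isOpen fun n => isOpen_iff_eventually.2 fun φ hφ => ?_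
  refine (hK n).eventually_forall_of_forall_eventually fun p hp => ?_
  have hne : IsOpen {z : C(T, X) × T × T | z.1 z.2.1 ≠ z.1 z.2.2} :=
    isOpen_ne_fun (by fun_prop) (by fun_prop)
  exact hne.mem_nhds (hφ p hp)

theorem exists_isFiberEmbeddingFamily [LocallyCompactSpace T] [SecondCountableTopology T]
    [T2Space T] [Nonempty T] [PolishSpace X] [T2Space Y] (hf : Continuous f)
    (hunc : ¬ {y | ∃ φ : C(T, X), Injective φ ∧ ∀ t, f (φ t) = y}.Countable) :
    ∃ (b : (ℕ → Bool) → Y) (Φ : (ℕ → Bool) → C(T, X)), IsFiberEmbeddingFamily f b Φ := by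
  let := upgradeIsCompletelyMetrizable X
  borelize C(T, X)
  obtain ⟨t₀⟩ := ‹Nonempty T›
  have hclosed : IsClosed {φ : C(T, X) | ∀ t, f (φ t) = f (φ t₀)} := by
    simp only [ofPred_forall]
    exact isClosed_iInter fun t => isClosed_eq (by fun_prop) (by fun_prop)
  have hanalytic := (isGδ_setOf_injective.measurableSet.inter hclosed.measurableSet).analyticSet
  obtain ⟨c, hc, hcmem, hinj⟩ := exists_nat_bool_continuous_injective_comp_of_analyticSet
      (g := fun φ : C(T, X) => f (φ t₀)) (by fun_prop) hanalytic <| by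
    refine mt (·.mono ?_) hunc
    rintro y ⟨φ, hφ, hφy⟩
    exact ⟨φ, ⟨hφ, fun t => (hφy t).trans (hφy t₀).symm⟩, hφy t₀⟩
  exact ⟨_, c, by fun_prop, hinj, hc, fun s => (hcmem s).1, fun s t => (hcmem s).2 t⟩

theorem exists_isFiberEmbeddingFamily_nat_bool [PolishSpace X] [T2Space Y] (hf : Continuous f)
    (hunc : ¬ {y | ℵ₀ < #(f ⁻¹' {y})}.Countable) :
    ∃ (b : (ℕ → Bool) → Y) (Φ : (ℕ → Bool) → C(ℕ → Bool, X)), IsFiberEmbeddingFamily f b Φ := by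
  refine exists_isFiberEmbeddingFamily hf (mt (·.mono fun y hy => ?_) hunc)
  obtain ⟨c, hcy, hc, hinj⟩ :=
    (isClosed_singleton.preimage hf).exists_nat_bool_injection_of_not_countable
      (mt le_aleph0_iff_set_countable.2 (not_le.2 hy))
  exact ⟨⟨c, hc⟩, hinj, fun t => hcy (mem_range_self t)⟩

theorem continuousOn_range_of_leftInverse {e : S → X} {r : X → S}
    (he : IsInducing e) (hr : LeftInverse r e) : ContinuousOn r (range e) := by
  rintro _ ⟨s, rfl⟩
  rw [ContinuousWithinAt, ← he.map_nhds_eq, tendsto_map'_iff, hr.comp_eq_id, hr s]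
  exact tendsto_id

namespace IsFiberEmbeddingFamily

variable {b : S → Y} {Φ : S → C(T, X)}

theorem injective_uncurry (h : IsFiberEmbeddingFamily f b Φ) :
    Injective fun p : S × T => Φ p.1 p.2 := by
  rintro ⟨s, t⟩ ⟨s', t'⟩ hst
  obtain rfl : s = s' := h.injective_base <| by
    rw [← h.map_apply s t, ← h.map_apply s' t']
    exact congrArg f hst
  exact congrArg (Prod.mk s) (h.injective s hst)

theorem exists_looseFunction [CompactSpace S] [CompactSpace T] [Nonempty T] [T2Space X]
    (h : IsFiberEmbeddingFamily f b Φ) (hb : ¬ IsScatteredSet (range b)) :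
    ∃ (D : Set X) (φ : X → T), LooseFunction f D φ := by
  have : Nonempty S := range_nonempty_iff_nonempty.1 (nonempty_of_not_isScatteredSet hb)
  set e : S × T → X := fun p => Φ p.1 p.2
  have hcont : Continuous e :=
    continuous_eval.comp ((h.continuous.comp continuous_fst).prodMk continuous_snd)
  have he : IsClosedEmbedding e := hcont.isClosedEmbedding h.injective_uncurry
  have hinv : LeftInverse (invFun e) e := leftInverse_invFun h.injective_uncurry
  refine ⟨range e, fun x => (invFun e x).2, he.isClosed_range,
    continuous_snd.comp_continuousOn (continuousOn_range_of_leftInverse he.isInducing hinv),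
    range b, hb, ?_⟩
  rintro _ ⟨s, rfl⟩
  exact eq_univ_of_forall fun t =>
    ⟨Φ s t, ⟨h.map_apply s t, (s, t), rfl⟩, congrArg Prod.snd (hinv (s, t))⟩

end IsFiberEmbeddingFamily

end FiberEmbeddings

section Tightness

variable {X : Type u} {Y : Type v} {κ : Cardinal.{u}} {f : X → Y}

theorem mk_le_mk_fiber_of_pairwise_disjoint {Ps : Set (Set X)} {y : Y}
    (hdisj : Ps.Pairwise Disjoint) (hy : ∀ P ∈ Ps, y ∈ f '' P) : #Ps ≤ #(f ⁻¹' {y}) := by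
  choose x hxP hxy using fun P : Ps => hy P P.2
  refine mk_le_of_injective (f := fun P => ⟨x P, hxy P⟩) fun P P' hPP' => ?_
  have hx : x P = x P' := congrArg Subtype.val hPP'
  exact Subtype.ext (hdisj.eq P.2 P'.2 (not_disjoint_iff.2 ⟨x P, hxP P, hx ▸ hxP P'⟩))

theorem mk_le_continuum_of_polishSpace [TopologicalSpace X] [PolishSpace X] : #X ≤ 𝔠 := by
  cases isEmpty_or_nonempty X
  · simp
  obtain ⟨h, -, hsurj⟩ := PolishSpace.exists_nat_nat_continuous_surjective X
  have hulift : #X ≤ #(ULift.{u} (ℕ → ℕ)) :=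
    mk_le_of_surjective (hsurj.comp ULift.down_surjective)
  simpa using hulift

variable [TopologicalSpace X] [TopologicalSpace Y]

theorem not_isTightCard_of_pairwise_disjoint {ι : Type w} {F : ι → Set X} {Q : Set Y}
    (hdisj : Pairwise (Disjoint on F)) (hclosed : ∀ i, IsClosed (F i))
    (hQ : ¬ IsScatteredSet Q) (himage : ∀ i, f '' F i = Q)
    (hκ : Cardinal.lift.{w} κ ≤ Cardinal.lift.{u} #ι) : ¬ IsTightCard κ f := by
  have hF : Injective F := by
    intro i j hij
    by_contra hne
    have hempty : F i = ∅ := by simpa [onFun, ← hij] using hdisj hne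
    exact (nonempty_of_not_isScatteredSet hQ).ne_empty (by rw [← himage i, hempty, image_empty])
  obtain ⟨e⟩ : Nonempty (κ.out ↪ ι) := lift_mk_le'.1 (by rwa [mk_out])
  refine not_not.2 ⟨range (F ∘ e), ⟨?_, ?_, Q, hQ, ?_⟩, ?_⟩
  · exact Pairwise.range_pairwise (hdisj.comp_of_injective e.injective)
  · exact forall_mem_range.2 fun k => hclosed (e k)
  · exact forall_mem_range.2 fun k => himage (e k)
  · rw [mk_range_eq _ (hF.comp e.injective), mk_out]

theorem IsFiberEmbeddingFamily.not_isTightCard {S : Type*} {T : Type w} [TopologicalSpace S]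
    [CompactSpace S] [TopologicalSpace T] [T2Space X] {b : S → Y} {Φ : S → C(T, X)}
    (h : IsFiberEmbeddingFamily f b Φ) (hb : ¬ IsScatteredSet (range b))
    (hκ : Cardinal.lift.{w} κ ≤ Cardinal.lift.{u} #T) : ¬ IsTightCard κ f := by
  refine not_isTightCard_of_pairwise_disjoint (F := fun t => range fun s => Φ s t) ?_ ?_ hb ?_ hκ
  · refine fun t t' hne => Set.disjoint_left.2 ?_
    rintro _ ⟨s, rfl⟩ ⟨s', hs'⟩
    have hst : (s', t') = (s, t) := h.injective_uncurry hs'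
    exact hne (congrArg Prod.snd hst).symm
  · exact fun t => (isCompact_range ((continuous_eval_const t).comp h.continuous)).isClosed
  · intro t
    rw [← range_comp]
    exact congrArg range (funext fun s => h.map_apply s t)

theorem LooseFunction.not_isTightCard {K : Type w} [TopologicalSpace K] [T1Space K] {D : Set X}
    {φ : X → K} (h : LooseFunction f D φ) (hf : Continuous f) (hfclosed : IsClosedMap f)
    (hκ : Cardinal.lift.{w} κ ≤ Cardinal.lift.{u} #K) : ¬ IsTightCard κ f := by
  obtain ⟨hD, hφ, Q, hQ, hQφ⟩ := h
  have hfiber (k : K) : IsClosed (D ∩ φ ⁻¹' {k}) := hφ.preimage_isClosed_of_isClosed hD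
    isClosed_singleton
  refine not_isTightCard_of_pairwise_disjoint (Q := closure Q)
    (F := fun k => D ∩ φ ⁻¹' {k} ∩ f ⁻¹' closure Q) ?_ ?_ (mt (·.mono subset_closure) hQ) ?_ hκ
  · exact fun k k' hne => Set.disjoint_left.2 fun x hx hx' => hne (hx.1.2.symm.trans hx'.1.2)
  · exact fun k => (hfiber k).inter (isClosed_closure.preimage hf)
  · intro k
    rw [image_inter_preimage, inter_eq_right]
    refine closure_minimal (fun y hy => ?_) (hfclosed _ (hfiber k))
    obtain ⟨x, ⟨hxy, hxD⟩, hxk⟩ := (hQφ y hy).ge (mem_univ k)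
    exact ⟨x, ⟨hxD, hxk⟩, hxy⟩

theorem isTightCard_of_countable [PolishSpace Y] (hfclosed : IsClosedMap f)
    (hcount : {y | κ ≤ #(f ⁻¹' {y})}.Countable) : IsTightCard κ f := by
  rintro ⟨Ps, ⟨hdisj, hclosed, Q, hQ, himage⟩, rfl⟩
  have hcard (y : Y) (hy : y ∈ Q) : #Ps ≤ #(f ⁻¹' {y}) :=
    mk_le_mk_fiber_of_pairwise_disjoint hdisj fun P hP => (himage P hP).ge hy
  rcases Ps.eq_empty_or_nonempty with rfl | ⟨P, hP⟩
  · refine hQ (IsScatteredSet.mono ?_ (subset_univ Q))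
    rw [isScatteredSet_iff_countable_of_isClosed isClosed_univ]
    exact hcount.mono fun y _ => by simp
  · have hQclosed : IsClosed Q := himage P hP ▸ hfclosed P (hclosed P hP)
    exact hQ ((isScatteredSet_iff_countable_of_isClosed hQclosed).2 (hcount.mono hcard))

variable [PolishSpace X] [PolishSpace Y]

theorem not_isTightCard_of_le_aleph0 (hf : Continuous f) (hκ₀ : κ ≠ 0) (hκ : κ ≤ ℵ₀)
    (hunc : ¬ {y | κ ≤ #(f ⁻¹' {y})}.Countable) : ¬ IsTightCard κ f := by
  have : Countable κ.out := by rwa [← mk_le_aleph0_iff, mk_out]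
  have : Nonempty κ.out := by rwa [← mk_ne_zero_iff, mk_out]
  let : TopologicalSpace κ.out := ⊥
  have : DiscreteTopology κ.out := ⟨rfl⟩
  obtain ⟨b, Φ, hΦ⟩ := exists_isFiberEmbeddingFamily (T := κ.out) hf <| by
    refine mt (·.mono fun y hy => ?_) hunc
    obtain ⟨e⟩ : Nonempty (κ.out ↪ f ⁻¹' {y}) := by rwa [← Cardinal.le_def, mk_out]
    exact ⟨⟨fun k => e k, continuous_of_discreteTopology⟩,
      Subtype.val_injective.comp e.injective, fun k => (e k).2⟩
  exact hΦ.not_isTightCard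
    (not_isScatteredSet_range_nat_bool hΦ.continuous_base hΦ.injective_base) (by rw [mk_out])

theorem not_isTightCard_of_le_continuum (hf : Continuous f) (hκ : κ ≤ 𝔠)
    (hunc : ¬ {y | ℵ₀ < #(f ⁻¹' {y})}.Countable) : ¬ IsTightCard κ f := by
  obtain ⟨b, Φ, hΦ⟩ := exists_isFiberEmbeddingFamily_nat_bool hf hunc
  exact hΦ.not_isTightCard
    (not_isScatteredSet_range_nat_bool hΦ.continuous_base hΦ.injective_base) (by simpa using hκ)

theorem IsTightCard.countable (hκ : IsTightCard κ f) (hf : Continuous f) :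
    {y | κ ≤ #(f ⁻¹' {y})}.Countable := by
  by_contra hunc
  rcases eq_or_ne κ 0 with rfl | hκ₀
  · refine not_isTightCard_of_pairwise_disjoint (Q := univ) (F := PEmpty.elim.{_, 1})
      ?_ ?_ ?_ ?_ ?_ hκ
    · exact fun i => i.elim
    · exact fun i => i.elim
    · rw [isScatteredSet_iff_countable_of_isClosed isClosed_univ]
      simpa using hunc
    · exact fun i => i.elim
    · simp
  rcases le_or_gt κ ℵ₀ with hle | hlt
  · exact not_isTightCard_of_le_aleph0 hf hκ₀ hle hunc hκ
  · obtain ⟨y, hy⟩ : {y | κ ≤ #(f ⁻¹' {y})}.Nonempty :=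
      nonempty_iff_ne_empty.2 fun hempty => hunc (hempty ▸ countable_empty)
    have hκc : κ ≤ 𝔠 := hy.trans ((mk_set_le _).trans mk_le_continuum_of_polishSpace)
    exact not_isTightCard_of_le_continuum hf hκc
      (mt (·.mono fun y hy => hlt.trans_le hy) hunc) hκ

theorem isTightCard_iff_countable (hf : Continuous f) (hfclosed : IsClosedMap f) :
    IsTightCard κ f ↔ {y | κ ≤ #(f ⁻¹' {y})}.Countable :=
  ⟨fun hκ => hκ.countable hf, isTightCard_of_countable hfclosed⟩

theorem weaklyCTight_iff_isTightCard_continuum (hf : Continuous f) (hfclosed : IsClosedMap f) :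
    WeaklyCTight f ↔ IsTightCard 𝔠 f := by
  constructor
  · refine fun hweak => isTightCard_of_countable hfclosed ?_
    by_contra hunc
    obtain ⟨b, Φ, hΦ⟩ := exists_isFiberEmbeddingFamily_nat_bool hf
      (mt (·.mono fun y hy => aleph0_lt_continuum.trans_le hy) hunc)
    exact hweak (hΦ.exists_looseFunction
      (not_isScatteredSet_range_nat_bool hΦ.continuous_base hΦ.injective_base))
  · rintro htight ⟨D, φ, hφ⟩
    exact hφ.not_isTightCard hf hfclosed (by simp) htight

end Tightness

theorem stmt2_general {X : Type u} {Y : Type v} [TopologicalSpace X] [PolishSpace X]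
    [TopologicalSpace Y] [PolishSpace Y] (f : X → Y) (hf : Continuous f) (hfclosed : IsClosedMap f)
    (κ : Cardinal.{u}) :
    (IsTightCard κ f ↔ {y : Y | κ ≤ Cardinal.mk (f ⁻¹' {y})}.Countable) ∧
      (WeaklyCTight f ↔ IsTightCard Cardinal.continuum f) :=
  ⟨isTightCard_iff_countable hf hfclosed, weaklyCTight_iff_isTightCard_continuum hf hfclosed⟩

/-- For compact metrizable `X, Y` and continuous `f : X → Y`:
`f` is `κ`-tight iff `{y : |f⁻¹{y}| ≥ κ}` is countable, and
`f` is weakly c-tight iff `f` is `c`-tight where `c = 2^ℵ₀`. -/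
theorem stmt2 {X Y : Type u}
    [TopologicalSpace X] [CompactSpace X] [TopologicalSpace.MetrizableSpace X]
    [TopologicalSpace Y] [CompactSpace Y] [TopologicalSpace.MetrizableSpace Y]
    (f : X → Y) (hf : Continuous f) (κ : Cardinal.{u}) :
    (IsTightCard κ f ↔ {y : Y | κ ≤ Cardinal.mk (f ⁻¹' {y})}.Countable) ∧
      (WeaklyCTight f ↔ IsTightCard Cardinal.continuum f) := by
  let := metrizableSpaceMetric X
  let := metrizableSpaceMetric Y
  exact stmt2_general f hf hf.isClosedMap κ
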